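/- Let d ≥ 2 be an integer, G a graph, u ∈ V(G), and C ⊆ N^{≥d}_G(u). If G[C] is P3-free and the connected components of G[C] are pairwise at distance at least d in G, then G[C ∪ {u}] is P3-free and the connected components of G[C ∪ {u}] are pairwise at distance at least d in G. -/

import Mathlib

open SimpleGraph

/-- The connected components of `G[S]` are pairwise at distance at least `d` in `G`. -/
def CompsFar {V : Type*} (G : SimpleGraph V) (d : ℕ) (S : Set V) : Prop :=
  ∀ x y : S, ¬ (G.induce S).Reachable x y → (d : ℕ∞) ≤ G.edist x y

/-!
Since `d ≥ 2`, no vertex of `C` is adjacent to `u`, so `u` is isolated in `G[C ∪ {u}]`. An embedding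
of a graph without isolated vertices, such as `P₃`, therefore avoids `u`. The only new component is
`{u}`, and its distance to the others is at least `d` by the choice of `C`.
-/

section

variable {V W : Type*} {G : SimpleGraph V} {H : SimpleGraph W} {d : ℕ} {u v : V} {s t C : Set V}

theorem not_adj_of_one_lt_edist (h : 1 < G.edist u v) : ¬ G.Adj u v :=
  fun hadj => h.ne' (edist_eq_one_iff_adj.2 hadj)

theorem isIsolated_of_isIsolated_map (f : H →g G) {i : W} (h : G.IsIsolated (f i)) :
    H.IsIsolated i :=
  fun j hij => h (f j) (f.map_adj hij)

theorem isIsolated_induce_insert (h : ∀ v ∈ C, ¬ G.Adj u v) :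
    (G.induce (insert u C)).IsIsolated ⟨u, Set.mem_insert u C⟩ := by
  rintro ⟨v, rfl | hv⟩ hadj
  · exact hadj.ne rfl
  · exact h v hv hadj

theorem isIndContained_induce_of_forall_mem (f : H ↪g G.induce s) (hf : ∀ i, (f i : V) ∈ t) :
    H ⊴ G.induce t :=
  ⟨RelEmbedding.codRestrict t ((Embedding.induce s).comp f) hf⟩

theorem isIndContained_induce_of_insert (hH : ∀ i, ¬ H.IsIsolated i)
    (hu : (G.induce (insert u C)).IsIsolated ⟨u, Set.mem_insert u C⟩)
    (h : H ⊴ G.induce (insert u C)) : H ⊴ G.induce C := by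
  obtain ⟨f⟩ := h
  refine isIndContained_induce_of_forall_mem f fun i => (f i).2.resolve_left fun hfi => ?_
  have hfi' : f i = ⟨u, Set.mem_insert u C⟩ := Subtype.ext hfi
  exact hH i (isIsolated_of_isIsolated_map f.toHom (hfi' ▸ hu))

theorem reachable_induce_mono (hst : s ⊆ t) {x y : s} (h : (G.induce s).Reachable x y) :
    (G.induce t).Reachable (Set.inclusion hst x) (Set.inclusion hst y) :=
  h.map (G.induceHomOfLE hst).toHom

theorem CompsFar.insert (hC : CompsFar G d C) (hu : ∀ v ∈ C, (d : ℕ∞) ≤ G.edist u v) :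
    CompsFar G d (insert u C) := by
  rintro ⟨x, rfl | hx⟩ ⟨y, rfl | hy⟩ hxy
  · exact absurd (Reachable.refl _) hxy
  · exact hu y hy
  · exact edist_comm.trans_ge (hu x hx)
  · exact hC ⟨x, hx⟩ ⟨y, hy⟩ fun h => hxy (reachable_induce_mono (Set.subset_insert u C) h)

theorem stmt12_general (hH : ∀ i, ¬ H.IsIsolated i) (hd : 2 ≤ d)
    (hC : C ⊆ {v : V | (d : ℕ∞) ≤ G.edist u v})
    (hfree : IsEmpty (H ↪g G.induce C)) (hfar : CompsFar G d C) :
    IsEmpty (H ↪g G.induce (insert u C)) ∧ CompsFar G d (insert u C) := by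
  have one_lt_d : (1 : ℕ∞) < d := by exact_mod_cast hd
  have not_adj : ∀ v ∈ C, ¬ G.Adj u v :=
    fun v hv => not_adj_of_one_lt_edist (one_lt_d.trans_le (hC hv))
  refine ⟨?_, hfar.insert hC⟩
  contrapose! hfree
  exact isIndContained_induce_of_insert hH (isIsolated_induce_insert not_adj) hfree

end

/-- Let `d ≥ 2`, `u ∈ V(G)` and `C ⊆ N^{≥d}_G(u)`. If `G[C]` is `P₃`-free and its
connected components are pairwise at distance at least `d` in `G`, then `G[C ∪ {u}]` is
`P₃`-free and its connected components are pairwise at distance at least `d` in `G`. -/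
theorem stmt12 {V : Type*} [Fintype V] (d : ℕ) (hd : 2 ≤ d) (G : SimpleGraph V)
    (u : V) (C : Set V) (hC : C ⊆ {v : V | (d : ℕ∞) ≤ G.edist u v})
    (hP3 : IsEmpty (pathGraph 3 ↪g G.induce C))
    (hfar : CompsFar G d C) :
    IsEmpty (pathGraph 3 ↪g G.induce (insert u C)) ∧
      CompsFar G d (insert u C) :=
  stmt12_general (pathGraph_preconnected 3).not_isIsolated hd hC hP3 hfar
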